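/- For all u, v ∈ V_p, the bilinear form B admits the equivalent representation B(u,v) = ∫_{−1}^{1} ((I u)'(s), v(s))_M ds + (τ/2) ∫_{−1}^{1} (u(s), v(s))_A ds. -/

import Mathlib

open Matrix Polynomial

/-- The `k`-th Legendre polynomial (Rodrigues' formula), normalized so that `L_k(1) = 1`. -/
noncomputable def legendre (k : ℕ) : Polynomial ℝ :=
  ((2 ^ k * (Nat.factorial k) : ℝ))⁻¹ •
    ((fun q => Polynomial.derivative q)^[k] ((Polynomial.X ^ 2 - 1) ^ k))

/-- Evaluation at `s` of the `ℝⁿ`-valued polynomial with coefficients `c` (degree ≤ p). -/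
noncomputable def pev {n p : ℕ} (c : Fin (p + 1) → Fin n → ℝ) (s : ℝ) : Fin n → ℝ :=
  ∑ j : Fin (p + 1), s ^ (j : ℕ) • c j

/-- Evaluation at `s` of the derivative of the `ℝⁿ`-valued polynomial with coefficients `c`. -/
noncomputable def pdev {n p : ℕ} (c : Fin (p + 1) → Fin n → ℝ) (s : ℝ) : Fin n → ℝ :=
  ∑ j : Fin (p + 1), ((((j : ℕ) : ℝ)) * s ^ ((j : ℕ) - 1)) • c j

/-- Evaluation at `s` of `(I v)'`, the derivative of the reconstruction `I v` of the
`ℝⁿ`-valued polynomial `v` with coefficients `c`, where the reconstruction operator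
`I v := v − v(−1)·(−1)^p (L_p − L_{p+1})/2` acts coefficientwise. -/
noncomputable def reconD {n p : ℕ} (c : Fin (p + 1) → Fin n → ℝ) (s : ℝ) : Fin n → ℝ :=
  pdev c s -
    ((-1 : ℝ) ^ p * (Polynomial.derivative (legendre p - legendre (p + 1))).eval s / 2) •
      pev c (-1)

/-- The DG bilinear form `B(u, ·)` applied to a test function `g : ℝ → ℝⁿ`:
`B(u,g) = ∫_{−1}^{1} (u'(s), g(s))_M ds + (u(−1), g(−1))_M + (τ/2) ∫_{−1}^{1} (u(s), g(s))_A ds`,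
where `(u,v)_M := vᵀ M u`. -/
noncomputable def Bform {n p : ℕ} (M A : Matrix (Fin n) (Fin n) ℝ) (τ : ℝ)
    (c : Fin (p + 1) → Fin n → ℝ) (g : ℝ → Fin n → ℝ) : ℝ :=
  (∫ s in (-1 : ℝ)..1, g s ⬝ᵥ (M *ᵥ pdev c s)) + g (-1) ⬝ᵥ (M *ᵥ pev c (-1)) +
    (τ / 2) * ∫ s in (-1 : ℝ)..1, g s ⬝ᵥ (A *ᵥ pev c s)

/-- The operator `P v := A⁻¹ M (I v)' + (τ/2) v`, evaluated at `s`. -/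
noncomputable def Pop {n p : ℕ} (M A : Matrix (Fin n) (Fin n) ℝ) (τ : ℝ)
    (c : Fin (p + 1) → Fin n → ℝ) (s : ℝ) : Fin n → ℝ :=
  (A⁻¹ * M) *ᵥ reconD c s + (τ / 2) • pev c s

lemma aux_integral_deriv (f : ℝ[X]) :
    ∫ s in (-1 : ℝ)..1, (derivative f).eval s = f.eval 1 - f.eval (-1) := by
  apply intervalIntegral.integral_eq_sub_of_hasDerivAt (f := fun s => f.eval s)
    (f' := fun s => (derivative f).eval s)
  · intro x _
    exact f.hasDerivAt x
  · exact (derivative f).continuous.intervalIntegrable _ _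

lemma aux_parts (q f : ℝ[X]) :
    ∫ s in (-1 : ℝ)..1, (q * derivative f).eval s
      = q.eval 1 * f.eval 1 - q.eval (-1) * f.eval (-1)
        - ∫ s in (-1 : ℝ)..1, (derivative q * f).eval s := by
  have h := aux_integral_deriv (q * f)
  rw [derivative_mul] at h
  simp only [eval_add] at h
  rw [intervalIntegral.integral_add
    ((derivative q * f).continuous.intervalIntegrable _ _)
    ((q * derivative f).continuous.intervalIntegrable _ _)] at h
  simp only [eval_mul] at h ⊢
  linarith

lemma aux_factor_one (k : ℕ) :
    ((X ^ 2 - 1 : ℝ[X]) ^ k).map (algebraMap ℝ ℝ) = (X - C 1) ^ k * (X + 1) ^ k := by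
  rw [← mul_pow]
  simp
  congr 1
  ring

lemma aux_factor_neg_one (k : ℕ) :
    ((X ^ 2 - 1 : ℝ[X]) ^ k).map (algebraMap ℝ ℝ) = (X - C (-1)) ^ k * (X - 1) ^ k := by
  rw [← mul_pow]
  simp
  congr 1
  ring

lemma aux_orth (k : ℕ) : ∀ j ≤ k, ∀ q : ℝ[X], derivative^[j] q = 0 →
    ∫ s in (-1 : ℝ)..1, (q * derivative^[j] ((X ^ 2 - 1 : ℝ[X]) ^ k)).eval s = 0 := by
  intro j
  induction j with
  | zero =>
    intro _ q hq
    simp at hq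
    simp [hq]
  | succ j ih =>
    intro hj q hq
    have h1 : (derivative^[j] ((X ^ 2 - 1 : ℝ[X]) ^ k)).eval 1 = 0 := by
      have := aeval_iterate_derivative_of_lt ((X ^ 2 - 1 : ℝ[X]) ^ k) k (1 : ℝ)
        (aux_factor_one k) (k := j) (by omega)
      simpa [coe_aeval_eq_eval] using this
    have h2 : (derivative^[j] ((X ^ 2 - 1 : ℝ[X]) ^ k)).eval (-1) = 0 := by
      have := aeval_iterate_derivative_of_lt ((X ^ 2 - 1 : ℝ[X]) ^ k) k (-1 : ℝ)
        (aux_factor_neg_one k) (k := j) (by omega)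
      simpa [coe_aeval_eq_eval] using this
    rw [Function.iterate_succ_apply', aux_parts, h1, h2, ih (by omega) (derivative q)]
    · simp
    · rwa [Function.iterate_succ_apply] at hq

lemma legendre_eval_one (k : ℕ) : (legendre k).eval 1 = 1 := by
  have := aeval_iterate_derivative_self ((X ^ 2 - 1 : ℝ[X]) ^ k) k (1 : ℝ) (aux_factor_one k)
  rw [coe_aeval_eq_eval] at this
  unfold legendre
  rw [eval_smul]
  erw [this]
  have h : (k.factorial : ℝ) ≠ 0 := by positivity
  simp
  norm_num
  field_simp

lemma legendre_eval_neg_one (k : ℕ) : (legendre k).eval (-1) = (-1) ^ k := by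
  have := aeval_iterate_derivative_self ((X ^ 2 - 1 : ℝ[X]) ^ k) k (-1 : ℝ) (aux_factor_neg_one k)
  rw [coe_aeval_eq_eval] at this
  unfold legendre
  rw [eval_smul]
  erw [this]
  have h : (k.factorial : ℝ) ≠ 0 := by positivity
  have h2 : (-1 - 1 : ℝ) ^ k = (-1) ^ k * 2 ^ k := by
    rw [← mul_pow]; norm_num
  simp only [eval_pow, eval_sub, eval_X, eval_one, smul_eq_mul, nsmul_eq_mul, h2]
  field_simp

lemma legendre_orth (k : ℕ) (q : ℝ[X]) (hq : derivative^[k] q = 0) :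
    ∫ s in (-1 : ℝ)..1, (q * legendre k).eval s = 0 := by
  have h := aux_orth k k le_rfl q hq
  unfold legendre
  simp only [mul_smul_comm, eval_smul, smul_eq_mul]
  rw [intervalIntegral.integral_const_mul]
  erw [h]
  simp

lemma legendre_key (p : ℕ) (q : ℝ[X]) (hq : derivative^[p + 1] q = 0) :
    ∫ s in (-1 : ℝ)..1, (q * derivative (legendre p - legendre (p + 1))).eval s
      = - (2 * (-1) ^ p * q.eval (-1)) := by
  have hq' : derivative^[p] (derivative q) = 0 := by
    rwa [Function.iterate_succ_apply] at hq
  have h1 := legendre_orth p (derivative q) hq'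
  have h2 := legendre_orth (p + 1) (derivative q) (by
    rw [Function.iterate_succ_apply', hq', derivative_zero])
  rw [aux_parts, mul_sub]
  simp only [eval_sub]
  rw [intervalIntegral.integral_sub
    ((derivative q * legendre p).continuous.intervalIntegrable _ _)
    ((derivative q * legendre (p + 1)).continuous.intervalIntegrable _ _), h1, h2]
  simp only [legendre_eval_one, legendre_eval_neg_one]
  ring

lemma pev_continuous {n p : ℕ} (c : Fin (p + 1) → Fin n → ℝ) : Continuous (pev c) := by
  unfold pev; fun_prop

lemma pdev_continuous {n p : ℕ} (c : Fin (p + 1) → Fin n → ℝ) : Continuous (pdev c) := by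
  unfold pdev; fun_prop

/-- **Equivalent representation of the DG bilinear form.** For all `u, v ∈ V_p`,
`B(u,v) = ∫_{−1}^{1} ((I u)'(s), v(s))_M ds + (τ/2) ∫_{−1}^{1} (u(s), v(s))_A ds`. -/
theorem Bform_recon_representation {n p : ℕ} (M A : Matrix (Fin n) (Fin n) ℝ)
    (hM : M.PosDef) (hA : A.PosDef) (τ : ℝ) (hτ : 0 < τ)
    (c d : Fin (p + 1) → Fin n → ℝ) :
    Bform M A τ c (fun s => pev d s)
      = (∫ s in (-1 : ℝ)..1, pev d s ⬝ᵥ (M *ᵥ reconD c s)) +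
        (τ / 2) * ∫ s in (-1 : ℝ)..1, pev d s ⬝ᵥ (A *ᵥ pev c s) := by
  unfold Bform
  congr 1
  set w : Fin n → ℝ := M *ᵥ pev c (-1) with hw
  let q : ℝ[X] := ∑ j : Fin (p + 1), C (d j ⬝ᵥ w) * X ^ (j : ℕ)
  have hqe : ∀ s, pev d s ⬝ᵥ w = q.eval s := by
    intro s
    simp only [q, pev, eval_finsetSum, sum_dotProduct, smul_dotProduct, eval_mul, eval_C,
      eval_pow, eval_X, smul_eq_mul]
    exact Finset.sum_congr rfl fun j _ => mul_comm _ _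
  have hqd : derivative^[p + 1] q = 0 := by
    apply iterate_derivative_eq_zero
    refine Nat.lt_succ_of_le (natDegree_sum_le_of_forall_le _ _ fun j _ => ?_)
    exact (natDegree_C_mul_X_pow_le _ _).trans (by omega)
  have hint : ∀ s, pev d s ⬝ᵥ (M *ᵥ reconD c s) = pev d s ⬝ᵥ (M *ᵥ pdev c s)
      - ((-1 : ℝ) ^ p / 2) * (q * derivative (legendre p - legendre (p + 1))).eval s := by
    intro s
    unfold reconD
    rw [mulVec_sub, mulVec_smul, dotProduct_sub, dotProduct_smul, ← hw, hqe, eval_mul, smul_eq_mul]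
    ring
  have hc1 : Continuous fun s => pev d s ⬝ᵥ (M *ᵥ pdev c s) :=
    (pev_continuous d).dotProduct (continuous_const.matrix_mulVec (pdev_continuous c))
  have hc2 : Continuous fun s : ℝ => ((-1 : ℝ) ^ p / 2) *
      (q * derivative (legendre p - legendre (p + 1))).eval s :=
    continuous_const.mul (Polynomial.continuous _)
  simp only [hint]
  rw [intervalIntegral.integral_sub (hc1.intervalIntegrable _ _)
    (hc2.intervalIntegrable _ _),
    intervalIntegral.integral_const_mul, legendre_key p q hqd, hqe]
  have h1 : ((-1 : ℝ) ^ p) * (-1) ^ p = 1 := by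
    rw [← mul_pow]; norm_num
  linear_combination (-q.eval (-1)) * h1
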